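/- Let 0 < q < 1, let x be in the interval [0,1], and let k be a nonnegative integer. Then for every real t, the series \sum_{n=0}^{\infty} (1 + (-1)^n) * (B_{k,n+k}(x | q) / C(n+k,k)) * t^n / n! converges with sum 2 * [x]_q^k * cosh(t * [1-x]_{1/q}). (This is identity (15) in the paper.) -/

import Mathlib

open Real

/-- The `q`-number of a real number `y`: `[y]_q = (1 - q^y)/(1 - q)`. -/
noncomputable def qNum (q y : ℝ) : ℝ := (1 - q ^ y) / (1 - q)

/-- The `q`-Bernstein polynomial `B_{k,n}(x | q) = C(n,k) [x]_q^k [1-x]_{1/q}^{n-k}`. -/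
noncomputable def qBernstein (q : ℝ) (k n : ℕ) (x : ℝ) : ℝ :=
  (n.choose k : ℝ) * (qNum q x) ^ k * (qNum (1 / q) (1 - x)) ^ (n - k)

theorem hasSum_one_add_neg_one_pow_mul {R : Type*} [Ring R] [TopologicalSpace R]
    [ContinuousAdd R] {f : ℕ → R} {s : R} (hf : HasSum (fun n ↦ f (2 * n)) s) :
    HasSum (fun n ↦ (1 + (-1) ^ n) * f n) (2 * s) := by
  have odd_terms_vanish : ∀ n ∉ Set.range (2 * · : ℕ → ℕ), (1 + (-1) ^ n) * f n = 0 := by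
    intro n hn
    rw [range_two_mul, Set.mem_ofPred_eq, Nat.not_even_iff_odd] at hn
    rw [hn.neg_one_pow, add_neg_cancel, zero_mul]
  have even_terms_double : ∀ n, (1 + (-1) ^ (2 * n)) * f (2 * n) = f (2 * n) + f (2 * n) := by
    intro n
    rw [(even_two_mul n).neg_one_pow, one_add_one_eq_two, two_mul]
  rw [← (mul_right_injective₀ two_ne_zero).hasSum_iff odd_terms_vanish, two_mul]
  exact (hf.add hf).congr_fun even_terms_double

theorem hasSum_one_add_neg_one_pow_mul_pow_div_factorial (z : ℝ) :
    HasSum (fun n : ℕ ↦ (1 + (-1 : ℝ) ^ n) * (z ^ n / n.factorial)) (2 * cosh z) :=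
  hasSum_one_add_neg_one_pow_mul (Real.hasSum_cosh z)

theorem qBernstein_div_choose (q x : ℝ) {k n : ℕ} (hkn : k ≤ n) :
    qBernstein q k n x / n.choose k = qNum q x ^ k * qNum (1 / q) (1 - x) ^ (n - k) := by
  have choose_ne_zero : (n.choose k : ℝ) ≠ 0 := mod_cast (Nat.choose_pos hkn).ne'
  rw [qBernstein, mul_assoc, mul_div_cancel_left₀ _ choose_ne_zero]

theorem qBernstein_cosh_hasSum_general (q : ℝ) (_hq0 : 0 < q) (_hq1 : q ≠ 1)
    (x : ℝ) (k : ℕ) (t : ℝ) :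
    HasSum (fun n : ℕ ↦
        (1 + (-1 : ℝ) ^ n) * (qBernstein q k (n + k) x / (n + k).choose k) * t ^ n / n.factorial)
      (2 * qNum q x ^ k * cosh (t * qNum (1 / q) (1 - x))) := by
  have cosh_series := (hasSum_one_add_neg_one_pow_mul_pow_div_factorial
    (t * qNum (1 / q) (1 - x))).mul_left (qNum q x ^ k)
  rw [mul_comm 2, mul_assoc]
  refine cosh_series.congr_fun fun n ↦ ?_
  rw [qBernstein_div_choose q x (Nat.le_add_left k n), Nat.add_sub_cancel, mul_pow]
  ring

/-- Identity (15) of the paper: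
`∑_{n≥0} (1 + (-1)^n) (B_{k,n+k}(x|q) / C(n+k,k)) t^n/n! = 2 [x]_q^k cosh(t [1-x]_{1/q})`. -/
theorem qBernstein_cosh_hasSum (q : ℝ) (hq0 : 0 < q) (hq1 : q < 1)
    (x : ℝ) (hx : x ∈ Set.Icc (0 : ℝ) 1) (k : ℕ) (t : ℝ) :
    HasSum (fun n : ℕ =>
        (1 + (-1 : ℝ) ^ n) * (qBernstein q k (n + k) x / ((n + k).choose k : ℝ)) * t ^ n / (Nat.factorial n : ℝ))
      (2 * (qNum q x) ^ k * Real.cosh (t * qNum (1 / q) (1 - x))) :=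
  qBernstein_cosh_hasSum_general q hq0 hq1.ne x k t
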